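/- Proposition: The number of negative squares of K is independent of the ball on which it is computed: for every r, r' with 0 < r ≤ ρ and 0 < r' ≤ ρ, the supremum of ν₋(G(p₁,…,p_k)) over all finite tuples p₁,…,p_k ∈ B_r equals the supremum of ν₋(G(p₁,…,p_k)) over all finite tuples p₁,…,p_k ∈ B_{r'}. In particular, K has κ negative squares in B_r if and only if it has κ negative squares in B_{r'}. -/

import Mathlib

/- Setting: quaternionic hermitian kernels of the form `K(p,q) = Σ pⁿ a_{n,m} q̄^m`.
Column vectors `ι → ℍ` form a right `ℍ`-vector space (a module over `ℍᵐᵒᵖ`).  For a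
Hermitian matrix `H`, `v* H v = star v ⬝ᵥ H.mulVec v` is real, and the negativity
index `ν₋(H)` is the largest dimension of a right subspace on which the quadratic
form `v ↦ (v* H v).re` is negative definite. -/

open Quaternion MulOpposite Matrix

attribute [local instance] Matrix.normedAddCommGroup

/-- The negativity index `ν₋(H)`: the largest dimension of a right `ℍ`-subspace on
which the Hermitian form of `H` is strictly negative. -/
noncomputable def negIndex {ι : Type*} [Fintype ι] (H : Matrix ι ι ℍ[ℝ]) : ℕ :=
  sSup {d : ℕ | ∃ W : Submodule ℍ[ℝ]ᵐᵒᵖ (ι → ℍ[ℝ]),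
      Module.finrank ℍ[ℝ]ᵐᵒᵖ W = d ∧
      ∀ v ∈ W, v ≠ 0 → (star v ⬝ᵥ H.mulVec v).re < 0}

/-- The kernel `K(p,q) = Σ_{n,m≥0} pⁿ a_{n,m} q̄^m` built from the coefficient
matrices `a_{n,m}`. -/
noncomputable def kerK {N : ℕ} (a : ℕ → ℕ → Matrix (Fin N) (Fin N) ℍ[ℝ])
    (p q : ℍ[ℝ]) : Matrix (Fin N) (Fin N) ℍ[ℝ] :=
  fun i j => ∑' nm : ℕ × ℕ, p ^ nm.1 * a nm.1 nm.2 i j * (star q) ^ nm.2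

/-- The Gram block matrix `G(p₁,…,p_k) = (K(p_i,p_j))_{i,j}` of a kernel `K` at a
finite tuple of points. -/
noncomputable def gram {N k : ℕ} (K : ℍ[ℝ] → ℍ[ℝ] → Matrix (Fin N) (Fin N) ℍ[ℝ])
    (p : Fin k → ℍ[ℝ]) : Matrix (Fin k × Fin N) (Fin k × Fin N) ℍ[ℝ] :=
  fun x y => K (p x.1) (p y.1) x.2 y.2

/-- `K` has `κ` negative squares in the ball `B_r`: all Gram block matrices at tuples
of points of `B_r` have `ν₋ ≤ κ`, with equality for at least one tuple. -/
noncomputable def hasNegSquares {N : ℕ} (a : ℕ → ℕ → Matrix (Fin N) (Fin N) ℍ[ℝ])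
    (r : ℝ) (κ : ℕ) : Prop :=
  (∀ (k : ℕ) (p : Fin k → ℍ[ℝ]), (∀ i, ‖p i‖ < r) → negIndex (gram (kerK a) p) ≤ κ) ∧
  (∃ (k : ℕ) (p : Fin k → ℍ[ℝ]), (∀ i, ‖p i‖ < r) ∧ negIndex (gram (kerK a) p) = κ)

/-- The supremum (in `ℕ∞`) of the negativity indices of the Gram block matrices of the
kernel `K` over all finite tuples of points of the ball `B_r`. -/
noncomputable def negSup {N : ℕ} (a : ℕ → ℕ → Matrix (Fin N) (Fin N) ℍ[ℝ]) (r : ℝ) : ℕ∞ :=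
  sSup {d : ℕ∞ | ∃ (k : ℕ) (p : Fin k → ℍ[ℝ]),
    (∀ i, ‖p i‖ < r) ∧ d = (negIndex (gram (kerK a) p) : ℕ∞)}

/- The index `ν₋` is lower semicontinuous and does not increase under congruence. The Gram
matrix of `K` at any points of the closed ball of radius `ρ` is a limit of congruences of the
truncated coefficient matrices `A_M = (a_{n,m})_{n,m<M}`. Conversely, take `M` distinct real nodes
`t x_l`: they commute with everything, so the inverse Vandermonde matrix of `x`, with column `s`
multiplied by `t⁻ˢ`, turns the Gram matrix into a congruent one that tends to `A_M` as `t → 0`.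
Hence the supremum over each ball is `sup_M ν₋(A_M)`, in which the radius does not occur. -/

open Filter Topology
open scoped Kronecker

section NegIndex

variable {ι κ : Type*} [Fintype ι] [Fintype κ]

/-- The right subspace `W` is negative for the Hermitian form of `H`; `negIndex H` is the
largest dimension of such a `W`. -/
def IsNegDefOn (H : Matrix ι ι ℍ[ℝ]) (W : Submodule ℍ[ℝ]ᵐᵒᵖ (ι → ℍ[ℝ])) : Prop :=
  ∀ v ∈ W, v ≠ 0 → (star v ⬝ᵥ H *ᵥ v).re < 0

theorem bddAbove_finrank_isNegDefOn (H : Matrix ι ι ℍ[ℝ]) :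
    BddAbove {d : ℕ | ∃ W : Submodule ℍ[ℝ]ᵐᵒᵖ (ι → ℍ[ℝ]),
      Module.finrank ℍ[ℝ]ᵐᵒᵖ W = d ∧ IsNegDefOn H W} := by
  have : Module.Finite ℍ[ℝ]ᵐᵒᵖ (ι → ℍ[ℝ]) := .of_restrictScalars_finite ℝ _ _
  refine ⟨Module.finrank ℍ[ℝ]ᵐᵒᵖ (ι → ℍ[ℝ]), ?_⟩
  rintro d ⟨W, rfl, -⟩
  exact Submodule.finrank_le W

theorem IsNegDefOn.finrank_le_negIndex {H : Matrix ι ι ℍ[ℝ]}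
    {W : Submodule ℍ[ℝ]ᵐᵒᵖ (ι → ℍ[ℝ])} (hW : IsNegDefOn H W) :
    Module.finrank ℍ[ℝ]ᵐᵒᵖ W ≤ negIndex H :=
  le_csSup (bddAbove_finrank_isNegDefOn H) ⟨W, rfl, hW⟩

theorem exists_isNegDefOn_finrank_eq_negIndex (H : Matrix ι ι ℍ[ℝ]) :
    ∃ W : Submodule ℍ[ℝ]ᵐᵒᵖ (ι → ℍ[ℝ]),
      Module.finrank ℍ[ℝ]ᵐᵒᵖ W = negIndex H ∧ IsNegDefOn H W := by
  have hbot : IsNegDefOn H ⊥ := fun v hv hv0 => absurd ((Submodule.mem_bot _).mp hv) hv0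
  refine Nat.sSup_mem ?_ (bddAbove_finrank_isNegDefOn H)
  exact ⟨_, ⊥, rfl, hbot⟩

theorem star_dotProduct_conjTranspose_mul_mul_mulVec {R : Type*} [Semiring R] [StarRing R]
    (H : Matrix ι ι R) (L : Matrix ι κ R) (v : κ → R) :
    star v ⬝ᵥ (Lᴴ * H * L) *ᵥ v = star (L *ᵥ v) ⬝ᵥ H *ᵥ (L *ᵥ v) := by
  rw [← mulVec_mulVec, ← mulVec_mulVec, star_mulVec, ← dotProduct_mulVec]

theorem negIndex_conjTranspose_mul_mul_le (H : Matrix ι ι ℍ[ℝ]) (L : Matrix ι κ ℍ[ℝ]) :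
    negIndex (Lᴴ * H * L) ≤ negIndex H := by
  obtain ⟨W, hdim, hW⟩ := exists_isNegDefOn_finrank_eq_negIndex (Lᴴ * H * L)
  let f : W →ₗ[ℍ[ℝ]ᵐᵒᵖ] ι → ℍ[ℝ] := (mulVecBilin ℍ[ℝ] ℍ[ℝ]ᵐᵒᵖ L).domRestrict W
  have hneg : ∀ v : W, v ≠ 0 → (star (f v) ⬝ᵥ H *ᵥ f v).re < 0 := fun v hv => by
    have := hW v v.2 (by simpa using hv)
    rwa [star_dotProduct_conjTranspose_mul_mul_mulVec] at this
  have hinj : Function.Injective f := (injective_iff_map_eq_zero f).mpr fun v hfv => by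
    by_contra hv
    simpa [hfv] using hneg v hv
  have hrange : IsNegDefOn H (LinearMap.range f) := by
    rintro _ ⟨v, rfl⟩ hv
    exact hneg v fun h => hv (by rw [h, map_zero])
  rw [← hdim, ← LinearMap.finrank_range_of_inj hinj]
  exact hrange.finrank_le_negIndex

theorem re_form_smul (H : Matrix ι ι ℍ[ℝ]) (t : ℝ) (v : ι → ℍ[ℝ]) :
    (star (t • v) ⬝ᵥ H *ᵥ (t • v)).re = t ^ 2 * (star v ⬝ᵥ H *ᵥ v).re := by
  have hstar : star (t • v) = t • star v := funext fun i => Quaternion.star_smul t (v i)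
  rw [hstar, mulVec_smul, smul_dotProduct, dotProduct_smul, smul_smul, Quaternion.re_smul,
    smul_eq_mul, sq]

theorem continuous_re_form :
    Continuous fun z : Matrix ι ι ℍ[ℝ] × (ι → ℍ[ℝ]) => (star z.2 ⬝ᵥ z.1 *ᵥ z.2).re :=
  Quaternion.continuous_re.comp <|
    continuous_snd.star.dotProduct (continuous_fst.matrix_mulVec continuous_snd)

theorem isNegDefOn_of_forall_mem_sphere {H : Matrix ι ι ℍ[ℝ]}
    {W : Submodule ℍ[ℝ]ᵐᵒᵖ (ι → ℍ[ℝ])}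
    (h : ∀ v ∈ Metric.sphere 0 1 ∩ (W : Set (ι → ℍ[ℝ])), (star v ⬝ᵥ H *ᵥ v).re < 0) :
    IsNegDefOn H W := by
  intro v hv hv0
  have hnorm : 0 < ‖v‖ := norm_pos_iff.mpr hv0
  have hunit := h (‖v‖⁻¹ • v)
    ⟨by simp [norm_smul, hnorm.ne'], (W.restrictScalars ℝ).smul_mem _ hv⟩
  rw [re_form_smul] at hunit
  exact (pos_iff_neg_of_mul_neg hunit).mp (by positivity)

/-- Lower semicontinuity: negativity on a fixed subspace is an open condition, by compactness of
its unit sphere. -/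
theorem eventually_negIndex_le (H : Matrix ι ι ℍ[ℝ]) :
    ∀ᶠ H' in 𝓝 H, negIndex H ≤ negIndex H' := by
  obtain ⟨W, hdim, hW⟩ := exists_isNegDefOn_finrank_eq_negIndex H
  have hcompact : IsCompact (Metric.sphere 0 1 ∩ (W : Set (ι → ℍ[ℝ]))) :=
    have : ProperSpace (ι → ℍ[ℝ]) := FiniteDimensional.proper ℝ _
    (isCompact_sphere _ _).inter_right (W.restrictScalars ℝ).closed_of_finiteDimensional
  have hopen : ∀ᶠ H' in 𝓝 H, ∀ v ∈ Metric.sphere 0 1 ∩ (W : Set (ι → ℍ[ℝ])),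
      (star v ⬝ᵥ H' *ᵥ v).re < 0 :=
    hcompact.eventually_forall_of_forall_eventually fun v hv =>
      continuous_re_form.continuousAt.eventually_lt_const <|
        hW v hv.2 (Metric.ne_of_mem_sphere hv.1 one_ne_zero)
  filter_upwards [hopen] with H' hH'
  rw [← hdim]
  exact (isNegDefOn_of_forall_mem_sphere hH').finrank_le_negIndex

end NegIndex

/-- The congruence `(B ⊗ 1)ᴴ H (B ⊗ 1)` of a block matrix `H`, in which the scalar matrix `B` acts
on the block index only. -/
def blockCongr {R l m n : Type*} [Semiring R] [StarRing R] [Fintype l] [Fintype n] [DecidableEq n]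
    (B : Matrix l m R) (H : Matrix (l × n) (l × n) R) : Matrix (m × n) (m × n) R :=
  (B ⊗ₖ (1 : Matrix n n R))ᴴ * H * (B ⊗ₖ (1 : Matrix n n R))

theorem blockCongr_apply {R l m n : Type*} [Semiring R] [StarRing R] [Fintype l] [Fintype n]
    [DecidableEq n] (B : Matrix l m R) (H : Matrix (l × n) (l × n) R) (x y : m × n) :
    blockCongr B H x y = ∑ s, ∑ t, star (B s x.1) * H (s, x.2) (t, y.2) * B t y.1 := by
  simp only [blockCongr, mul_apply, conjTranspose_apply, kroneckerMap_apply, one_apply,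
    Fintype.sum_prod_type, mul_ite, ite_mul, mul_one, mul_zero, zero_mul, apply_ite star, star_zero,
    Finset.sum_ite_eq', Finset.mem_univ, if_true, Finset.sum_mul]
  exact Finset.sum_comm

theorem negIndex_blockCongr_le {l m n : Type*} [Fintype l] [Fintype m] [Fintype n] [DecidableEq n]
    (B : Matrix l m ℍ[ℝ]) (H : Matrix (l × n) (l × n) ℍ[ℝ]) :
    negIndex (blockCongr B H) ≤ negIndex H :=
  negIndex_conjTranspose_mul_mul_le _ _

section Kernel

variable {N k M : ℕ} {a : ℕ → ℕ → Matrix (Fin N) (Fin N) ℍ[ℝ]} {ρ : ℝ}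

/-- The truncation `(a_{n,m})_{n,m<M}` of the infinite coefficient matrix, as a block matrix. -/
def coeffBlock (a : ℕ → ℕ → Matrix (Fin N) (Fin N) ℍ[ℝ]) (M : ℕ) :
    Matrix (Fin M × Fin N) (Fin M × Fin N) ℍ[ℝ] :=
  fun x y => a x.1 y.1 x.2 y.2

theorem hasSum_kerK
    (hsum : Summable fun nm : ℕ × ℕ => ‖a nm.1 nm.2‖ * ρ ^ (nm.1 + nm.2))
    {p q : ℍ[ℝ]} (hp : ‖p‖ ≤ ρ) (hq : ‖q‖ ≤ ρ) (i j : Fin N) :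
    HasSum (fun nm : ℕ × ℕ => p ^ nm.1 * a nm.1 nm.2 i j * star q ^ nm.2) (kerK a p q i j) := by
  have hρ : 0 ≤ ρ := (norm_nonneg p).trans hp
  refine (Summable.of_norm_bounded hsum fun nm => ?_).hasSum
  calc ‖p ^ nm.1 * a nm.1 nm.2 i j * star q ^ nm.2‖
      = ‖p‖ ^ nm.1 * ‖a nm.1 nm.2 i j‖ * ‖q‖ ^ nm.2 := by
        rw [norm_mul, norm_mul, norm_pow, norm_pow, norm_star]
    _ ≤ ρ ^ nm.1 * ‖a nm.1 nm.2‖ * ρ ^ nm.2 := by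
        gcongr
        exact norm_entry_le_entrywise_sup_norm _
    _ = ‖a nm.1 nm.2‖ * ρ ^ (nm.1 + nm.2) := by ring

theorem tendsto_blockCongr_coeffBlock
    (hsum : Summable fun nm : ℕ × ℕ => ‖a nm.1 nm.2‖ * ρ ^ (nm.1 + nm.2))
    {p : Fin k → ℍ[ℝ]} (hp : ∀ l, ‖p l‖ ≤ ρ) :
    Tendsto (fun M => blockCongr (of fun (n : Fin M) l => star (p l) ^ (n : ℕ)) (coeffBlock a M))
      atTop (𝓝 (gram (kerK a) p)) := by
  refine tendsto_pi_nhds.mpr fun x => tendsto_pi_nhds.mpr fun y => ?_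
  have hsquares : Tendsto (fun M => Finset.range M ×ˢ Finset.range M) atTop atTop :=
    tendsto_finsetProd_atTop.comp <|
      (tendsto_finset_range.prod_atTop tendsto_finset_range).comp tendsto_atTop_diagonal
  refine ((hasSum_kerK hsum (hp x.1) (hp y.1) x.2 y.2).comp hsquares).congr fun M => ?_
  simp only [blockCongr_apply, Function.comp_apply, Finset.sum_product,
    Finset.sum_range, of_apply, star_pow, star_star, coeffBlock]

theorem exists_negIndex_gram_le_negIndex_coeffBlock
    (hsum : Summable fun nm : ℕ × ℕ => ‖a nm.1 nm.2‖ * ρ ^ (nm.1 + nm.2))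
    {p : Fin k → ℍ[ℝ]} (hp : ∀ l, ‖p l‖ ≤ ρ) :
    ∃ M, negIndex (gram (kerK a) p) ≤ negIndex (coeffBlock a M) := by
  obtain ⟨M, hM⟩ := ((tendsto_blockCongr_coeffBlock hsum hp).eventually
    (eventually_negIndex_le (gram (kerK a) p))).exists
  exact ⟨M, hM.trans (negIndex_blockCongr_le _ _)⟩

/-- The moments `∑ₗ p̄ₗⁿ B_{l,s}` of the weights in column `s` of `B`, placed at the nodes `p`. -/
noncomputable def moment {S : Type*} (p : Fin k → ℍ[ℝ]) (B : Matrix (Fin k) S ℍ[ℝ]) (n : ℕ)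
    (s : S) : ℍ[ℝ] :=
  ∑ l, star (p l) ^ n * B l s

theorem hasSum_blockCongr_gram {S : Type*}
    (hsum : Summable fun nm : ℕ × ℕ => ‖a nm.1 nm.2‖ * ρ ^ (nm.1 + nm.2))
    {p : Fin k → ℍ[ℝ]} (hp : ∀ l, ‖p l‖ ≤ ρ) (B : Matrix (Fin k) S ℍ[ℝ]) (x y : S × Fin N) :
    HasSum (fun nm : ℕ × ℕ =>
        star (moment p B nm.1 x.1) * a nm.1 nm.2 x.2 y.2 * moment p B nm.2 y.1)
      (blockCongr B (gram (kerK a) p) x y) := by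
  have hterm : ∀ nm : ℕ × ℕ,
      star (moment p B nm.1 x.1) * a nm.1 nm.2 x.2 y.2 * moment p B nm.2 y.1 =
        ∑ l, ∑ l', star (B l x.1) *
          (p l ^ nm.1 * a nm.1 nm.2 x.2 y.2 * star (p l') ^ nm.2) * B l' y.1 := fun nm => by
    simp only [moment, star_sum, star_mul, star_pow, star_star, Finset.sum_mul, Finset.mul_sum,
      mul_assoc]
    exact Finset.sum_comm
  simp_rw [hterm, blockCongr_apply]
  exact hasSum_sum fun l _ => hasSum_sum fun l' _ =>
    ((hasSum_kerK hsum (hp l) (hp l') x.2 y.2).mul_left _).mul_right _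

theorem tendsto_blockCongr_gram {T : Type*} {F : Filter T}
    (hsum : Summable fun nm : ℕ × ℕ => ‖a nm.1 nm.2‖ * ρ ^ (nm.1 + nm.2))
    {p : T → Fin k → ℍ[ℝ]} {B : T → Matrix (Fin k) (Fin M) ℍ[ℝ]} {C : ℝ}
    (hp : ∀ᶠ t in F, ∀ l, ‖p t l‖ ≤ ρ)
    (hbound : ∀ᶠ t in F, ∀ n s, ‖moment (p t) (B t) n s‖ ≤ C * ρ ^ n)
    (hlim : ∀ n s, Tendsto (fun t => moment (p t) (B t) n s) F (𝓝 (if n = s then 1 else 0))) :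
    Tendsto (fun t => blockCongr (B t) (gram (kerK a) (p t))) F (𝓝 (coeffBlock a M)) := by
  refine tendsto_pi_nhds.mpr fun x => tendsto_pi_nhds.mpr fun y => ?_
  have hentry : ∑' nm : ℕ × ℕ, star (if nm.1 = x.1 then 1 else 0) * a nm.1 nm.2 x.2 y.2 *
      (if nm.2 = y.1 then 1 else 0) = coeffBlock a M x y := by
    rw [tsum_eq_single ((x.1 : ℕ), (y.1 : ℕ)) fun nm hnm => ?_]
    · simp [coeffBlock]
    · grind [Prod.ext_iff, star_zero]
  rw [← hentry]
  refine (tendsto_tsum_of_dominated_convergence (hsum.mul_left (C ^ 2))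
    (fun nm => ((hlim nm.1 x.1).star.mul_const _).mul (hlim nm.2 y.1)) ?_).congr' ?_
  · filter_upwards [hbound] with t ht nm
    calc ‖star (moment (p t) (B t) nm.1 x.1) * a nm.1 nm.2 x.2 y.2 *
            moment (p t) (B t) nm.2 y.1‖
        = ‖moment (p t) (B t) nm.1 x.1‖ * ‖a nm.1 nm.2 x.2 y.2‖ *
            ‖moment (p t) (B t) nm.2 y.1‖ := by rw [norm_mul, norm_mul, norm_star]
      _ ≤ (C * ρ ^ nm.1) * ‖a nm.1 nm.2‖ * (C * ρ ^ nm.2) := by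
          have hnonneg := (norm_nonneg _).trans (ht nm.1 x.1)
          gcongr
          exacts [ht _ _, norm_entry_le_entrywise_sup_norm _, ht _ _]
      _ = C ^ 2 * (‖a nm.1 nm.2‖ * ρ ^ (nm.1 + nm.2)) := by ring
  · filter_upwards [hp] with t ht
    exact (hasSum_blockCongr_gram hsum ht (B t) x y).tsum_eq

section SmallNodes

/-- The coefficient of `X ^ s` in the polynomial of degree `< M` interpolating `X ^ n` at the
distinct nodes `x`. -/
noncomputable def interpCoeff (x : Fin M → ℝ) (n : ℕ) (s : Fin M) : ℝ :=
  ∑ l, x l ^ n * ((vandermonde x)ᵀ)⁻¹ l s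

/-- The real nodes `x`, scaled by `t` and regarded as quaternions. -/
noncomputable def scaledNode (x : Fin M → ℝ) (t : ℝ) : Fin M → ℍ[ℝ] :=
  fun l => ((t * x l : ℝ) : ℍ[ℝ])

/-- The weights at the nodes `scaledNode x t` whose column `s` computes the coefficient of `X ^ s`
of the interpolating polynomial. -/
noncomputable def scaledWeight (x : Fin M → ℝ) (t : ℝ) : Matrix (Fin M) (Fin M) ℍ[ℝ] :=
  of fun l s => ((((vandermonde x)ᵀ)⁻¹ l s * (t ^ (s : ℕ))⁻¹ : ℝ) : ℍ[ℝ])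

theorem moment_scaledNode (x : Fin M → ℝ) (t : ℝ) (n : ℕ) (s : Fin M) :
    moment (scaledNode x t) (scaledWeight x t) n s =
      ((t ^ n * (t ^ (s : ℕ))⁻¹ * interpCoeff x n s : ℝ) : ℍ[ℝ]) := by
  simp only [moment, scaledNode, scaledWeight, of_apply, Quaternion.star_coe,
    ← Quaternion.coe_pow, ← Quaternion.coe_mul, interpCoeff, Finset.mul_sum]
  rw [← Quaternion.algebraMap_def, map_sum]
  exact Finset.sum_congr rfl fun l _ => congrArg _ (by ring)

theorem interpCoeff_of_lt {x : Fin M → ℝ} (hx : Function.Injective x) {n : ℕ} (hn : n < M)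
    (s : Fin M) : interpCoeff x n s = if n = s then 1 else 0 := by
  have hdet : IsUnit (vandermonde x)ᵀ.det := by
    rw [det_transpose]
    exact (det_vandermonde_ne_zero_iff.mpr hx).isUnit
  simpa [mul_apply, one_apply, interpCoeff, Fin.ext_iff] using
    congrFun₂ (mul_nonsing_inv _ hdet) ⟨n, hn⟩ s

theorem exists_abs_interpCoeff_le {x : Fin M → ℝ} (hx : ∀ l, |x l| ≤ ρ) :
    ∃ C, ∀ n s, |interpCoeff x n s| ≤ C * ρ ^ n := by
  refine ⟨∑ l, ∑ s, |((vandermonde x)ᵀ)⁻¹ l s|, fun n s => ?_⟩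
  rw [Finset.sum_mul]
  refine (Finset.abs_sum_le_sum_abs _ _).trans (Finset.sum_le_sum fun l _ => ?_)
  have : 0 ≤ ρ := (abs_nonneg _).trans (hx l)
  rw [abs_mul, abs_pow, mul_comm]
  gcongr
  · exact Finset.single_le_sum (fun s _ => abs_nonneg (((vandermonde x)ᵀ)⁻¹ l s))
      (Finset.mem_univ s)
  · exact hx l

theorem tendsto_pow_mul_inv_pow_mul {n s : ℕ} {c : ℝ} (hc : n < s → c = 0) :
    Tendsto (fun t : ℝ => t ^ n * (t ^ s)⁻¹ * c) (𝓝[>] 0) (𝓝 (if n = s then c else 0)) := by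
  obtain hlt | hle := lt_or_ge n s
  · simp [hc hlt]
  have hpow : Tendsto (fun t : ℝ => t ^ (n - s) * c) (𝓝[>] 0) (𝓝 (0 ^ (n - s) * c)) :=
    (((continuous_pow (n - s)).mul_const c).tendsto 0).mono_left nhdsWithin_le_nhds
  have hlim : (0 : ℝ) ^ (n - s) * c = if n = s then c else 0 := by
    simp only [zero_pow_eq, ite_mul, one_mul, zero_mul]
    grind
  rw [← hlim]
  refine hpow.congr' ?_
  filter_upwards [self_mem_nhdsWithin] with t ht
  rw [pow_sub₀ t (ne_of_gt ht) hle]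

theorem abs_pow_mul_inv_pow_mul_le {n s : ℕ} {c t : ℝ} (hc : n < s → c = 0) (ht : 0 < t)
    (ht1 : t ≤ 1) : |t ^ n * (t ^ s)⁻¹ * c| ≤ |c| := by
  obtain hlt | hle := lt_or_ge n s
  · simp [hc hlt]
  rw [← pow_sub₀ t ht.ne' hle, abs_mul, abs_of_pos (pow_pos ht _)]
  exact mul_le_of_le_one_left (abs_nonneg c) (pow_le_one₀ ht.le ht1)

theorem tendsto_blockCongr_gram_scaledNode
    (hsum : Summable fun nm : ℕ × ℕ => ‖a nm.1 nm.2‖ * ρ ^ (nm.1 + nm.2))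
    {x : Fin M → ℝ} (hinj : Function.Injective x) (hx : ∀ l, |x l| ≤ ρ) :
    Tendsto (fun t => blockCongr (scaledWeight x t) (gram (kerK a) (scaledNode x t)))
      (𝓝[>] 0) (𝓝 (coeffBlock a M)) := by
  obtain ⟨C, hC⟩ := exists_abs_interpCoeff_le hx
  have hzero (n : ℕ) (s : Fin M) (hns : n < s) : interpCoeff x n s = 0 := by
    rw [interpCoeff_of_lt hinj (hns.trans s.2), if_neg hns.ne]
  have hunit : ∀ᶠ t : ℝ in 𝓝[>] 0, 0 < t ∧ t ≤ 1 := Ioc_mem_nhdsGT one_pos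
  refine tendsto_blockCongr_gram hsum (C := C) ?_ ?_ fun n s => ?_
  · filter_upwards [hunit] with t ⟨ht, ht1⟩ l
    rw [scaledNode, Quaternion.norm_coe, Real.norm_eq_abs, abs_mul, abs_of_pos ht]
    exact (mul_le_of_le_one_left (abs_nonneg _) ht1).trans (hx l)
  · filter_upwards [hunit] with t ⟨ht, ht1⟩ n s
    rw [moment_scaledNode, Quaternion.norm_coe, Real.norm_eq_abs]
    exact (abs_pow_mul_inv_pow_mul_le (hzero n s) ht ht1).trans (hC n s)
  · have hlim : ((if n = s then interpCoeff x n s else 0 : ℝ) : ℍ[ℝ]) =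
        if n = s then 1 else 0 := by
      split_ifs with hns
      · rw [interpCoeff_of_lt hinj (hns ▸ s.2), if_pos hns, Quaternion.coe_one]
      · exact Quaternion.coe_zero
    simp_rw [moment_scaledNode, ← hlim]
    exact (Quaternion.continuous_coe.tendsto _).comp (tendsto_pow_mul_inv_pow_mul (hzero n s))

theorem exists_negIndex_coeffBlock_le_negIndex_gram
    (hsum : Summable fun nm : ℕ × ℕ => ‖a nm.1 nm.2‖ * ρ ^ (nm.1 + nm.2))
    (hρ : 0 < ρ) (M : ℕ) {r : ℝ} (hr : 0 < r) :
    ∃ p : Fin M → ℍ[ℝ], (∀ l, ‖p l‖ < r) ∧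
      negIndex (coeffBlock a M) ≤ negIndex (gram (kerK a) p) := by
  let nodes : ℕ ↪ Set.Icc 0 ρ := (Set.Icc_infinite hρ).natEmbedding
  let x : Fin M → ℝ := fun l => nodes l
  have hinj : Function.Injective x :=
    Subtype.val_injective.comp (nodes.injective.comp Fin.val_injective)
  have hx (l : Fin M) : |x l| ≤ ρ := by
    rw [abs_of_nonneg (nodes l).2.1]
    exact (nodes l).2.2
  have hsmall : ∀ᶠ t in 𝓝[>] (0 : ℝ), ∀ l, ‖scaledNode x t l‖ < r := by
    refine (eventually_all.mpr fun l => ?_).filter_mono nhdsWithin_le_nhds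
    have hcont : Continuous fun t => ‖scaledNode x t l‖ :=
      (Quaternion.continuous_coe.comp (continuous_mul_const (x l))).norm
    exact hcont.continuousAt.eventually_lt_const (by simpa [scaledNode] using hr)
  obtain ⟨t, ht, hle⟩ := (hsmall.and ((tendsto_blockCongr_gram_scaledNode hsum hinj hx).eventually
    (eventually_negIndex_le (coeffBlock a M)))).exists
  exact ⟨scaledNode x t, ht, hle.trans (negIndex_blockCongr_le _ _)⟩

end SmallNodes

theorem negSup_le_negSup
    (hsum : Summable fun nm : ℕ × ℕ => ‖a nm.1 nm.2‖ * ρ ^ (nm.1 + nm.2)) (hρ : 0 < ρ)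
    {r r' : ℝ} (hrρ : r ≤ ρ) (hr' : 0 < r') : negSup a r ≤ negSup a r' := by
  apply sSup_le
  rintro d ⟨k, p, hp, rfl⟩
  obtain ⟨M, hM⟩ :=
    exists_negIndex_gram_le_negIndex_coeffBlock hsum fun l => (hp l).le.trans hrρ
  obtain ⟨p', hp', hle⟩ := exists_negIndex_coeffBlock_le_negIndex_gram hsum hρ M hr'
  exact (Nat.cast_le.mpr (hM.trans hle)).trans (le_sSup ⟨M, p', hp', rfl⟩)

theorem hasNegSquares_iff_negSup_eq {r : ℝ} {κ : ℕ} : hasNegSquares a r κ ↔ negSup a r = κ := by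
  constructor
  · rintro ⟨hle, k, p, hp, hκ⟩
    refine IsGreatest.csSup_eq ⟨⟨k, p, hp, congrArg _ hκ.symm⟩, ?_⟩
    rintro d ⟨k', p', hp', rfl⟩
    exact Nat.cast_le.mpr (hle k' p' hp')
  · intro hsup
    refine ⟨fun k p hp => ?_, ?_⟩
    · have hle : (negIndex (gram (kerK a) p) : ℕ∞) ≤ negSup a r := le_sSup ⟨k, p, hp, rfl⟩
      exact Nat.cast_le.mp (hle.trans_eq hsup)
    · have : Nonempty {d : ℕ∞ | ∃ (k : ℕ) (p : Fin k → ℍ[ℝ]),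
          (∀ i, ‖p i‖ < r) ∧ d = negIndex (gram (kerK a) p)} :=
        ⟨_, 0, Fin.elim0, fun i => i.elim0, rfl⟩
      obtain ⟨k, p, hp, hκ⟩ :=
        ENat.sSup_mem_of_nonempty_of_lt_top (hsup.trans_lt (ENat.natCast_lt_top κ))
      exact ⟨k, p, hp, Nat.cast_injective (hκ.symm.trans hsup)⟩

end Kernel

theorem negSquares_independent_of_ball_general {N : ℕ}
    (a : ℕ → ℕ → Matrix (Fin N) (Fin N) ℍ[ℝ]) (ρ : ℝ)
    (hsum : Summable fun nm : ℕ × ℕ => ‖a nm.1 nm.2‖ * ρ ^ (nm.1 + nm.2))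
    (r r' : ℝ) (hr : 0 < r) (hrρ : r ≤ ρ) (hr' : 0 < r') (hr'ρ : r' ≤ ρ) :
    negSup a r = negSup a r' ∧
      ∀ κ : ℕ, (hasNegSquares a r κ ↔ hasNegSquares a r' κ) := by
  have hρ : 0 < ρ := hr.trans_le hrρ
  have hsup : negSup a r = negSup a r' :=
    le_antisymm (negSup_le_negSup hsum hρ hrρ hr') (negSup_le_negSup hsum hρ hr'ρ hr)
  refine ⟨hsup, fun κ => ?_⟩
  rw [hasNegSquares_iff_negSup_eq, hasNegSquares_iff_negSup_eq, hsup]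

/-- **Proposition**: the number of negative squares of the kernel
`K(p,q) = Σ pⁿ a_{n,m} q̄^m` is independent of the ball on which it is computed: for
`0 < r ≤ ρ` and `0 < r' ≤ ρ`, the supremum of `ν₋(G(p₁,…,p_k))` over finite tuples in
`B_r` equals the supremum over finite tuples in `B_{r'}`; in particular, `K` has `κ`
negative squares in `B_r` iff it has `κ` negative squares in `B_{r'}`. -/
theorem negSquares_independent_of_ball {N : ℕ}
    (a : ℕ → ℕ → Matrix (Fin N) (Fin N) ℍ[ℝ])
    (ha : ∀ n m, a n m = (a m n)ᴴ) (ρ : ℝ) (hρ : 0 < ρ)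
    (hsum : Summable fun nm : ℕ × ℕ => ‖a nm.1 nm.2‖ * ρ ^ (nm.1 + nm.2))
    (r r' : ℝ) (hr : 0 < r) (hrρ : r ≤ ρ) (hr' : 0 < r') (hr'ρ : r' ≤ ρ) :
    negSup a r = negSup a r' ∧
      ∀ κ : ℕ, (hasNegSquares a r κ ↔ hasNegSquares a r' κ) :=
  negSquares_independent_of_ball_general a ρ hsum r r' hr hrρ hr' hr'ρ
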